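/- arXiv:2602.06029 — 2 statements merged into one kernel-verified Lean document; each statement's English description precedes it below -/
import Mathlib

section
/- Let σ > 0, μ ∈ ℝ, ζ ≥ 0, L ≥ 0, let r : ℝ → ℝ be Lipschitz continuous with constant L, and let f ∈ ℝ satisfy |f − μ| ≤ ζ^{1/2}·σ. If Y is distributed according to the Gaussian measure N(μ, σ²) on ℝ, then E[|r(f) − r(Y)|] ≤ L·(ζ^{1/2} + √(2/π))·σ. (The full 'Term 3' bound in the proof of Lemma B.4, using the smoothness-of-task assumption.) -/
open MeasureTheory ProbabilityTheory Real

/-! Passing through the mean, `dist (r f) (r Y) ≤ L * (|f - μ| + |Y - μ|)`, so it is enough to know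
the mean absolute deviation of a Gaussian. All its absolute moments are values of the Gamma
function, by symmetry and the substitution `t = x ^ 2 / (2 * v)`. -/

open scoped NNReal

lemma integral_abs_rpow_mul_exp_neg_mul_sq {p b : ℝ} (hp : -1 < p) (hb : 0 < b) :
    ∫ x : ℝ, |x| ^ p * exp (-b * x ^ 2) = b ^ (-(p + 1) / 2) * Gamma ((p + 1) / 2) := by
  have half_line : ∫ x in Set.Ioi (0 : ℝ), x ^ p * exp (-b * x ^ 2) =
      b ^ (-(p + 1) / 2) * (1 / 2) * Gamma ((p + 1) / 2) := by
    simpa only [rpow_two] using integral_rpow_mul_exp_neg_mul_rpow two_pos hp hb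
  calc ∫ x : ℝ, |x| ^ p * exp (-b * x ^ 2)
      = 2 * ∫ x in Set.Ioi (0 : ℝ), x ^ p * exp (-b * x ^ 2) := by
        simpa only [sq_abs] using integral_comp_abs (f := fun x ↦ x ^ p * exp (-b * x ^ (2 : ℕ)))
    _ = b ^ (-(p + 1) / 2) * Gamma ((p + 1) / 2) := by rw [half_line]; ring

lemma integral_abs_sub_rpow_gaussianReal (μ : ℝ) {v : ℝ≥0} (hv : v ≠ 0) {p : ℝ} (hp : -1 < p) :
    ∫ y, |y - μ| ^ p ∂(gaussianReal μ v) = (2 * v) ^ (p / 2) * Gamma ((p + 1) / 2) / √π := by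
  have hv_pos : (0 : ℝ) < 2 * v := by positivity
  have normalization : (√(2 * π * v))⁻¹ * (2 * v : ℝ)⁻¹ ^ (-(p + 1) / 2) =
      (2 * v : ℝ) ^ (p / 2) / √π := by
    rw [mul_right_comm, sqrt_mul hv_pos.le, sqrt_eq_rpow (2 * v), inv_rpow hv_pos.le,
      ← rpow_neg hv_pos.le, show -(-(p + 1) / 2) = p / 2 + 1 / 2 by ring, rpow_add hv_pos]
    field_simp
  calc ∫ y, |y - μ| ^ p ∂(gaussianReal μ v)
      = ∫ y, (√(2 * π * v))⁻¹ * (|y - μ| ^ p * exp (-(2 * v : ℝ)⁻¹ * (y - μ) ^ 2)) := by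
        rw [integral_gaussianReal_eq_integral_smul hv]
        congr! 2 with y
        simp only [gaussianPDFReal, smul_eq_mul]
        ring_nf
    _ = (√(2 * π * v))⁻¹ * ∫ x, |x| ^ p * exp (-(2 * v : ℝ)⁻¹ * x ^ 2) := by
        rw [integral_const_mul,
          integral_sub_right_eq_self (fun x ↦ |x| ^ p * exp (-(2 * v : ℝ)⁻¹ * x ^ 2)) μ]
    _ = (2 * v) ^ (p / 2) * Gamma ((p + 1) / 2) / √π := by
        rw [integral_abs_rpow_mul_exp_neg_mul_sq hp (inv_pos.mpr hv_pos), ← mul_assoc,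
          normalization, div_mul_eq_mul_div]

lemma integral_abs_sub_gaussianReal (μ : ℝ) (v : ℝ≥0) :
    ∫ y, |y - μ| ∂(gaussianReal μ v) = √(2 * v / π) := by
  rcases eq_or_ne v 0 with rfl | hv
  · simp
  · have first_moment := integral_abs_sub_rpow_gaussianReal μ hv (p := 1) (by norm_num)
    simp only [rpow_one, add_self_div_two, Gamma_one, mul_one, ← sqrt_eq_rpow] at first_moment
    rw [first_moment, sqrt_div (by positivity)]

lemma integrable_abs_sub_gaussianReal (μ c : ℝ) (v : ℝ≥0) :
    Integrable (fun y ↦ |y - c|) (gaussianReal μ v) :=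
  (((memLp_id_gaussianReal 1).integrable le_rfl).sub (integrable_const c)).abs

lemma integral_dist_le_mul_dist_add_integral_dist {E X : Type*} [PseudoMetricSpace E]
    [MeasurableSpace E] [PseudoMetricSpace X] {P : Measure E} [IsProbabilityMeasure P]
    {r : E → X} {L : ℝ} {x m : E} (hL : 0 ≤ L) (hr : ∀ y, dist (r x) (r y) ≤ L * dist x y)
    (hm : Integrable (fun y ↦ dist y m) P) :
    ∫ y, dist (r x) (r y) ∂P ≤ L * (dist x m + ∫ y, dist y m ∂P) := by
  calc ∫ y, dist (r x) (r y) ∂P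
      ≤ ∫ y, L * (dist x m + dist y m) ∂P :=
        integral_mono_of_nonneg (.of_forall fun _ ↦ dist_nonneg)
          (((integrable_const _).add hm).const_mul L)
          (.of_forall fun y ↦ (hr y).trans
            (mul_le_mul_of_nonneg_left (dist_triangle_right x y m) hL))
    _ = L * (dist x m + ∫ y, dist y m ∂P) := by
        rw [integral_const_mul, integral_add (integrable_const _) hm, integral_const,
          probReal_univ, one_smul]

theorem lipschitz_gaussian_regret_bound_general {X : Type*} [PseudoMetricSpace X]
    {σ μ δ L f : ℝ} {r : ℝ → X} (hσ : 0 ≤ σ) (hr : ∀ y, dist (r f) (r y) ≤ L * |f - y|)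
    (hf : |f - μ| ≤ δ * σ) :
    ∫ y, dist (r f) (r y) ∂(gaussianReal μ (σ ^ 2).toNNReal) ≤ L * (δ + √(2 / π)) * σ := by
  have hL : 0 ≤ L := by simpa using dist_nonneg.trans (hr (f + 1))
  have mean_deviation : ∫ y, |y - μ| ∂(gaussianReal μ (σ ^ 2).toNNReal) = √(2 / π) * σ := by
    rw [integral_abs_sub_gaussianReal, coe_toNNReal _ (sq_nonneg σ), mul_div_right_comm,
      sqrt_mul (by positivity), sqrt_sq hσ]
  calc ∫ y, dist (r f) (r y) ∂(gaussianReal μ (σ ^ 2).toNNReal)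
      ≤ L * (|f - μ| + ∫ y, |y - μ| ∂(gaussianReal μ (σ ^ 2).toNNReal)) :=
        integral_dist_le_mul_dist_add_integral_dist hL hr (integrable_abs_sub_gaussianReal μ μ _)
    _ ≤ L * (δ * σ + √(2 / π) * σ) := by rw [mean_deviation]; gcongr
    _ = L * (δ + √(2 / π)) * σ := by ring

/-- The full 'Term 3' bound in Lemma B.4: for `L`-Lipschitz regret `r`,
if `|f − μ| ≤ √ζ·σ` and `Y ~ N(μ, σ²)` then
`E[|r(f) − r(Y)|] ≤ L·(√ζ + √(2/π))·σ`. -/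
theorem lipschitz_gaussian_regret_bound (σ μ ζ L f : ℝ) (r : ℝ → ℝ)
    (hσ : 0 < σ) (hζ : 0 ≤ ζ) (hL : 0 ≤ L)
    (hr : ∀ y₁ y₂ : ℝ, |r y₁ - r y₂| ≤ L * |y₁ - y₂|)
    (hf : |f - μ| ≤ ζ ^ ((1 : ℝ) / 2) * σ) :
    ∫ y, |r f - r y| ∂(gaussianReal μ (Real.toNNReal (σ ^ 2))) ≤
      L * (ζ ^ ((1 : ℝ) / 2) + Real.sqrt (2 / π)) * σ :=
  lipschitz_gaussian_regret_bound_general (X := ℝ) hσ.le (hr f) hf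
end

section
/- Let a > 0, T ∈ ℕ, and v₁, …, v_T ∈ [0, 1]. Define I_T := (1/2)·∑_{t=1}^{T} log(1 + a·v_t) and C := 2 / log(1 + a). Then ∑_{t=1}^{T} √(v_t) ≤ √(C · T · I_T). (The combination of the variance-to-information inequality with the Cauchy–Schwarz step in the proof of Theorem 2, bounding the sum of predictive standard deviations by the total information gain.) -/
open Real Finset

section

variable {ι : Type*} {s : Finset ι} {v : ι → ℝ} {a : ℝ}

lemma sum_sqrt_le_sqrt_card_mul_sum (hv : ∀ i ∈ s, 0 ≤ v i) :
    ∑ i ∈ s, √(v i) ≤ √(#s * ∑ i ∈ s, v i) := by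
  apply Real.le_sqrt_of_sq_le
  calc (∑ i ∈ s, √(v i)) ^ 2 ≤ #s * ∑ i ∈ s, √(v i) ^ 2 := sq_sum_le_card_mul_sum_sq
    _ = #s * ∑ i ∈ s, v i := by rw [sum_congr rfl fun i hi => Real.sq_sqrt (hv i hi)]

lemma mul_log_one_add_le_log_one_add_mul {x : ℝ} (ha : -1 < a) (hx0 : 0 ≤ x) (hx1 : x ≤ 1) :
    x * log (1 + a) ≤ log (1 + a * x) := by
  have hpos : 0 < 1 + a := by linarith
  have hbernoulli : (1 + a) ^ x ≤ 1 + a * x := by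
    simpa only [mul_comm] using rpow_one_add_le_one_add_mul_self ha.le hx0 hx1
  calc x * log (1 + a) = log ((1 + a) ^ x) := (log_rpow hpos x).symm
    _ ≤ log (1 + a * x) := log_le_log (rpow_pos_of_pos hpos x) hbernoulli

lemma sum_mul_log_one_add_le_sum_log_one_add_mul (ha : -1 < a)
    (hv0 : ∀ i ∈ s, 0 ≤ v i) (hv1 : ∀ i ∈ s, v i ≤ 1) :
    (∑ i ∈ s, v i) * log (1 + a) ≤ ∑ i ∈ s, log (1 + a * v i) := by
  rw [sum_mul]
  exact sum_le_sum fun i hi => mul_log_one_add_le_log_one_add_mul ha (hv0 i hi) (hv1 i hi)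

theorem sum_sqrt_var_le_sqrt_info_general (ha : 0 < a)
    (hv0 : ∀ i ∈ s, 0 ≤ v i) (hv1 : ∀ i ∈ s, v i ≤ 1) :
    ∑ i ∈ s, √(v i) ≤
      √((2 / log (1 + a)) * #s * ((1 / 2) * ∑ i ∈ s, log (1 + a * v i))) := by
  have hlog : 0 < log (1 + a) := log_pos (by linarith)
  have hvar : ∑ i ∈ s, v i ≤ (∑ i ∈ s, log (1 + a * v i)) / log (1 + a) :=
    (le_div_iff₀ hlog).2 <| sum_mul_log_one_add_le_sum_log_one_add_mul (by linarith) hv0 hv1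
  calc ∑ i ∈ s, √(v i) ≤ √(#s * ∑ i ∈ s, v i) := sum_sqrt_le_sqrt_card_mul_sum hv0
    _ ≤ √(#s * ((∑ i ∈ s, log (1 + a * v i)) / log (1 + a))) := by gcongr
    _ = √((2 / log (1 + a)) * #s * ((1 / 2) * ∑ i ∈ s, log (1 + a * v i))) := by ring_nf

end

/-- Cauchy–Schwarz combined with the variance-to-information inequality:
the sum of predictive standard deviations is bounded by `√(C·T·I_T)`,
where `I_T = (1/2)·∑ log(1 + a·v_t)` and `C = 2/log(1 + a)`. -/
theorem sum_sqrt_var_le_sqrt_info (a : ℝ) (T : ℕ) (v : ℕ → ℝ) (ha : 0 < a)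
    (hv0 : ∀ t ∈ Finset.range T, 0 ≤ v t)
    (hv1 : ∀ t ∈ Finset.range T, v t ≤ 1) :
    ∑ t ∈ Finset.range T, Real.sqrt (v t) ≤
      Real.sqrt ((2 / Real.log (1 + a)) * T *
        ((1 / 2) * ∑ t ∈ Finset.range T, Real.log (1 + a * v t))) := by
  simpa only [card_range] using sum_sqrt_var_le_sqrt_info_general ha hv0 hv1
end
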